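/- Let I_X be the ideal described in the context and let w be the weight vector given there. Then the monomial E₆·F₅₆·G₆ belongs to the initial ideal in_w(I_X), i.e., to the ideal generated by the initial forms in_w(g) of all nonzero g ∈ I_X. -/

import Mathlib

open MvPolynomial

noncomputable section

/-- The `w`-weight `⟨w, m⟩` of an exponent vector / monomial `m`. -/
def mWeight {σ : Type*} (w : σ → ℝ) (m : σ →₀ ℕ) : ℝ :=
  m.sum fun i e => w i * e

/-- The initial form `in_w(f)`: the sum of the terms of `f` whose `w`-weight is
minimal among all terms of `f` (min-convention, trivial valuation). -/
def initialForm {σ K : Type*} [CommRing K] (w : σ → ℝ) (f : MvPolynomial σ K) :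
    MvPolynomial σ K :=
  (f.support.filter fun m => ∀ m' ∈ f.support, mWeight w m ≤ mWeight w m').sum
    fun m => monomial m (f.coeff m)

/-- A polynomial is a monomial if it equals `c · x^m` for a single exponent
vector `m` and a nonzero coefficient `c`. -/
def IsMonomial {σ K : Type*} [CommRing K] (f : MvPolynomial σ K) : Prop :=
  ∃ (m : σ →₀ ℕ) (c : K), c ≠ 0 ∧ f = monomial m c

/-- The initial ideal `in_w(I)`: the ideal generated by the initial forms of
all nonzero elements of `I`. -/
def initialIdeal {σ K : Type*} [CommRing K] (w : σ → ℝ)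
    (I : Ideal (MvPolynomial σ K)) : Ideal (MvPolynomial σ K) :=
  Ideal.span {g | ∃ h ∈ I, h ≠ 0 ∧ g = initialForm w h}


/-! ### The Cox ring of a smooth cubic surface

The base field is `K = ℚ(d₁,…,d₆)` (generic parameters), and the polynomial
ring has the 27 variables `E₁,…,E₆`, `F_{ij}` (for unordered pairs
`{i,j} ⊆ {1,…,6}`), `G₁,…,G₆`, indexed by `Fin 6` (so indices are shifted
down by one). -/

/-- The field `ℚ(d₁,…,d₆)` of rational functions in six variables. -/
abbrev KK : Type := FractionRing (MvPolynomial (Fin 6) ℚ)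

/-- The parameter `d_i` as an element of `ℚ(d₁,…,d₆)`. -/
def dK (i : Fin 6) : KK := algebraMap (MvPolynomial (Fin 6) ℚ) KK (X i)

/-- Index type for the 27 variables: `Sum.inl i` is `E_i`, `Sum.inr (Sum.inl s)`
is `F_{ij}` for the unordered (off-diagonal) pair `s = {i,j}`, and
`Sum.inr (Sum.inr i)` is `G_i`. -/
def CVar : Type :=
  Fin 6 ⊕ ({s : Sym2 (Fin 6) // ¬ s.IsDiag} ⊕ Fin 6)

/-- The variable `E_i`. -/
def Ev (i : Fin 6) : MvPolynomial CVar KK := X (Sum.inl i)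

/-- The variable `F_{ij}` (junk value `0` when `i = j`). -/
def Fv (i j : Fin 6) : MvPolynomial CVar KK :=
  if h : ¬ (s(i, j) : Sym2 (Fin 6)).IsDiag
  then X (Sum.inr (Sum.inl ⟨s(i, j), h⟩)) else 0

/-- The variable `G_i`. -/
def Gv (i : Fin 6) : MvPolynomial CVar KK := X (Sum.inr (Sum.inr i))

/-- The trinomial
`T_{i,jkl} = (d_k−d_l)(d_i+d_k+d_l) E_j F_{ij} − (d_j−d_l)(d_i+d_j+d_l) E_k F_{ik}
 + (d_j−d_k)(d_i+d_j+d_k) E_l F_{il}`. -/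
def T (i j k l : Fin 6) : MvPolynomial CVar KK :=
  C ((dK k - dK l) * (dK i + dK k + dK l)) * (Ev j * Fv i j) -
    C ((dK j - dK l) * (dK i + dK j + dK l)) * (Ev k * Fv i k) +
    C ((dK j - dK k) * (dK i + dK j + dK k)) * (Ev l * Fv i l)

/-- The weight vector `w` from the paper (Theorem on cubic surfaces):
`E = (2,1,0,1,1,1)`, `F₁₃ = 2`, `F₂₃ = F₃₄ = F₃₅ = F₃₆ = 1`, all remaining
`F`- and `G`-weights `0` (indices shifted down by one). -/
def wCox : CVar → ℝ
  | Sum.inl i => ![2, 1, 0, 1, 1, 1] i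
  | Sum.inr (Sum.inl s) =>
      if s.val = s(0, 2) then 2
      else if s.val = s(1, 2) ∨ s.val = s(2, 3) ∨ s.val = s(2, 4) ∨ s.val = s(2, 5)
      then 1 else 0
  | Sum.inr (Sum.inr _) => 0

/-! ### Pinning down the 270 trinomial generators of `I_X`

The cubic surface `X` is the blow-up of `ℙ²` in the six points
`p_i = (1 : d_i : d_i³)`.  The (saturated) Cox ideal is the kernel of the map
sending each of the 27 variables to the corresponding section, realized below
inside the fraction field of `K[x,y,z,t₁,…,t₆]`:
`E_i ↦ t_i`, `F_{ij} ↦ ℓ_{ij}/((d_j−d_i) t_i t_j)` (where `ℓ_{ij}` is the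
equation of the line through `p_i, p_j`), and `G_i ↦ q_i / ∏_{m≠i} t_m`
(where `q_i` is the equation of the conic through the five points `p_m`,
`m ≠ i`).  The 270 trinomial generators of `I_X` (the ten trinomials
`T_{1,jkl}` together with their 260 translates under the Weyl group `W(E₆)`
acting on the 27 lines) are exactly the trinomial relations supported on
three reducible members of one of the 27 conic bundle classes; below they are
characterized as: elements of the kernel which are sums of three terms, each
a product of two distinct variables, all three of the same `ℤ⁷`-multidegree
(for the Picard grading `deg E_i = e_i`, `deg F_{ij} = e₀−e_i−e_j`,
`deg G_i = 2e₀−∑_{j≠i} e_j`). -/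

/-- Auxiliary polynomial ring `K[x,y,z,t₁,…,t₆]` (variables `0,1,2` are
`x,y,z`; variable `3+i` is `t_i`). -/
abbrev SRing : Type := MvPolynomial (Fin 9) KK

/-- Its fraction field. -/
abbrev LF : Type := FractionRing SRing

/-- The coordinates `x, y, z` in `LF`. -/
def xL (a : Fin 3) : LF := algebraMap SRing LF (X (a.castLE (by omega)))

/-- The variables `t_i` in `LF`. -/
def tL (i : Fin 6) : LF := algebraMap SRing LF (X (i.addNat 3))

/-- The parameter `d_i` in `LF`. -/
def dL (i : Fin 6) : LF := algebraMap SRing LF (C (dK i))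

/-- The linear form `ℓ_{ij}` cutting out the line through
`p_i = (1:d_i:d_i³)` and `p_j = (1:d_j:d_j³)`. -/
def ellL (i j : Fin 6) : LF :=
  Matrix.det !![xL 0, xL 1, xL 2; 1, dL i, dL i ^ 3; 1, dL j, dL j ^ 3]

/-- The `r`-th element (in increasing order) of `{1,…,6} ∖ {i}`. -/
def cpl (i : Fin 6) (r : Fin 5) : Fin 6 :=
  ((Finset.univ.erase i).orderIsoOfFin
    (by rw [Finset.card_erase_of_mem (Finset.mem_univ i)]; simp) r).val

/-- The quadratic form `q_i` cutting out the conic through the five points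
`p_m = (1:d_m:d_m³)`, `m ≠ i` (a 6×6 determinant in the conic monomials). -/
def conicL (i : Fin 6) : LF :=
  Matrix.det (Matrix.of fun r c : Fin 6 =>
    Fin.cases
      (![xL 0 ^ 2, xL 0 * xL 1, xL 1 ^ 2, xL 0 * xL 2, xL 1 * xL 2, xL 2 ^ 2] c)
      (fun r' =>
        ![1, dL (cpl i r'), dL (cpl i r') ^ 2, dL (cpl i r') ^ 3,
          dL (cpl i r') ^ 4, dL (cpl i r') ^ 6] c)
      r)

/-- The realization map: its kernel is the (saturated) Cox ideal of `X`. -/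
def phiC : MvPolynomial CVar KK →ₐ[KK] LF :=
  aeval fun v => match v with
    | Sum.inl i => tL i
    | Sum.inr (Sum.inl s) =>
        ellL s.val.inf s.val.sup /
          ((dL s.val.sup - dL s.val.inf) * (tL s.val.inf * tL s.val.sup))
    | Sum.inr (Sum.inr i) => conicL i / ∏ m ∈ Finset.univ.erase i, tL m

/-- The `ℤ⁷`-multidegree (Picard grading) of the 27 variables. -/
def picDeg : CVar → Fin 7 → ℤ
  | Sum.inl i => Pi.single i.succ 1
  | Sum.inr (Sum.inl s) =>
      Pi.single 0 1 - Pi.single (Fin.succ s.val.inf) 1 -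
        Pi.single (Fin.succ s.val.sup) 1
  | Sum.inr (Sum.inr i) =>
      (Pi.single 0 2 + Pi.single i.succ 1) - ∑ j : Fin 6, Pi.single (Fin.succ j) 1

/-- The `ℤ⁷`-multidegree of a monomial (exponent vector). -/
def picDegM (m : CVar →₀ ℕ) : Fin 7 → ℤ :=
  ∑ v ∈ m.support, (m v : ℤ) • picDeg v


/-- Generic line form. -/
def ellG {A : Type*} [CommRing A] (d : Fin 6 → A) (x : Fin 3 → A) (i j : Fin 6) : A :=
  Matrix.det !![x 0, x 1, x 2; 1, d i, d i ^ 3; 1, d j, d j ^ 3]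

/-- Generic conic form, through the points indexed by `c`. -/
def conicG {A : Type*} [CommRing A] (d : Fin 6 → A) (x : Fin 3 → A) (e : Fin 5 → Fin 6) : A :=
  Matrix.det (Matrix.of fun r c : Fin 6 =>
    Fin.cases
      (![x 0 ^ 2, x 0 * x 1, x 1 ^ 2, x 0 * x 2, x 1 * x 2, x 2 ^ 2] c)
      (fun r' =>
        ![1, d (e r'), d (e r') ^ 2, d (e r') ^ 3, d (e r') ^ 4, d (e r') ^ 6] c)
      r)

lemma ellG_map {A B : Type*} [CommRing A] [CommRing B] (f : A →+* B) (d : Fin 6 → A)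
    (x : Fin 3 → A) (i j : Fin 6) :
    f (ellG d x i j) = ellG (fun a => f (d a)) (fun a => f (x a)) i j := by
  unfold ellG
  rw [RingHom.map_det]
  congr 1
  ext a b
  fin_cases a <;> fin_cases b <;> simp

lemma conicG_map {A B : Type*} [CommRing A] [CommRing B] (f : A →+* B) (d : Fin 6 → A)
    (x : Fin 3 → A) (e : Fin 5 → Fin 6) :
    f (conicG d x e) = conicG (fun a => f (d a)) (fun a => f (x a)) e := by
  unfold conicG
  rw [RingHom.map_det]
  congr 1
  ext a b
  refine Fin.cases ?_ (fun a => ?_) a <;> fin_cases b <;> simp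

/-- The three cubics. -/
def cubG {A : Type*} [CommRing A] (d : Fin 6 → A) (x : Fin 3 → A) : Fin 3 → A :=
  ![ellG d x 2 4 * conicG d x ![0, 1, 3, 4, 5],
    ellG d x 0 4 * conicG d x ![0, 1, 2, 3, 4],
    ellG d x 1 4 * ellG d x 3 4 * ellG d x 0 2]

lemma cubG_map {A B : Type*} [CommRing A] [CommRing B] (f : A →+* B) (d : Fin 6 → A)
    (x : Fin 3 → A) (k : Fin 3) :
    f (cubG d x k) = cubG (fun a => f (d a)) (fun a => f (x a)) k := by
  fin_cases k <;> simp [cubG, ellG_map, conicG_map]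

/-- Test points. -/
def ptsZ : Fin 3 → Fin 3 → ℤ := ![![1, 5, 125], ![2, 6, 72], ![0, 0, 1]]

/-- Test parameters. -/
def dZ : Fin 6 → ℤ := fun i => i.val

lemma con00 : conicG dZ (ptsZ 0) ![0, 1, 3, 4, 5] = 0 := by
  decide +kernel
lemma con01 : conicG dZ (ptsZ 0) ![0, 1, 2, 3, 4] = -518400 := by
  decide +kernel
lemma con11 : conicG dZ (ptsZ 1) ![0, 1, 2, 3, 4] = -1741824 := by
  decide +kernel
lemma con20 : conicG dZ (ptsZ 2) ![0, 1, 3, 4, 5] = -2880 := by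
  decide +kernel

lemma det_num : Matrix.det (Matrix.of fun j k => cubG dZ (ptsZ j) k) ≠ 0 := by
  rw [Matrix.det_fin_three]
  simp only [Matrix.of_apply, cubG, Matrix.cons_val_zero, Matrix.cons_val_one, Matrix.cons_val,
    con00, con01, con11, con20, ellG, Matrix.det_fin_three]
  simp [dZ, ptsZ]

lemma cpl_eq (i : Fin 6) (f : Fin 5 → Fin 6) (hf : StrictMono f) (h : ∀ x, f x ∈ Finset.univ.erase i) :
    cpl i = f := by
  have := Finset.orderEmbOfFin_unique (s := Finset.univ.erase i)
    (by rw [Finset.card_erase_of_mem (Finset.mem_univ i)]; simp) h hf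
  rw [this]
  rfl

lemma cpl2 : cpl 2 = ![0, 1, 3, 4, 5] := cpl_eq _ _ (by decide) (by decide)
lemma cpl5 : cpl 5 = ![0, 1, 2, 3, 4] := cpl_eq _ _ (by decide) (by decide)

lemma det_KK : Matrix.det (Matrix.of fun j k => cubG dK (fun a => ((ptsZ j a : ℤ) : KK)) k) ≠ 0 := by
  have h : Matrix.det (Matrix.of fun j k => cubG (X : Fin 6 → MvPolynomial (Fin 6) ℚ)
      (fun a => ((ptsZ j a : ℤ) : MvPolynomial (Fin 6) ℚ)) k) ≠ 0 := by
    intro h0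
    have h1 := congrArg (eval (fun i => ((dZ i : ℤ) : ℚ))) h0
    rw [RingHom.map_det, map_zero] at h1
    apply det_num
    have h2 : ((Matrix.det (Matrix.of fun j k => cubG dZ (ptsZ j) k) : ℤ) : ℚ) = 0 := by
      rw [← h1]
      change Int.castRingHom ℚ _ = _
      rw [RingHom.map_det]
      congr 1
      ext j k
      simp [cubG_map]
      exact cubG_map (Int.castRingHom ℚ) _ _ _
    exact_mod_cast h2
  have h3 : Matrix.det (Matrix.of fun j k => cubG dK (fun a => ((ptsZ j a : ℤ) : KK)) k) =
      algebraMap (MvPolynomial (Fin 6) ℚ) KK (Matrix.det (Matrix.of fun j k =>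
        cubG (X : Fin 6 → MvPolynomial (Fin 6) ℚ)
      (fun a => ((ptsZ j a : ℤ) : MvPolynomial (Fin 6) ℚ)) k)) := by
    rw [RingHom.map_det]
    congr 1
    ext j k
    simp [cubG_map]
    rfl
  rw [h3]
  exact fun h4 => h ((IsFractionRing.injective (MvPolynomial (Fin 6) ℚ) KK) (by rw [h4, map_zero]))

/-- Linear independence of the three cubics over `KK`. -/
lemma cub_indep (v : Fin 3 → KK)
    (h : ∑ k, algebraMap SRing LF (C (v k)) * cubG dL xL k = 0) : v = 0 := by
  have h1 : ∑ k, (C (v k) : SRing) * cubG (fun i => C (dK i)) (fun a => X (a.castLE (by omega))) k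
      = 0 := by
    apply IsFractionRing.injective SRing LF
    rw [map_zero, ← h, map_sum]
    refine Finset.sum_congr rfl fun k _ => ?_
    rw [map_mul, cubG_map]
    rfl
  apply Matrix.eq_zero_of_mulVec_eq_zero det_KK
  ext j
  have h2 := congrArg (eval (fun i : Fin 9 => if hi : i.val < 3 then ((ptsZ j ⟨i.val, hi⟩ : ℤ) : KK)
    else 0)) h1
  rw [map_zero, map_sum] at h2
  rw [Pi.zero_apply, ← h2]
  simp only [Matrix.mulVec, dotProduct, Matrix.of_apply]
  refine Finset.sum_congr rfl fun k _ => ?_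
  rw [map_mul, cubG_map, mul_comm]
  simp

lemma dL_sub_ne {i j : Fin 6} (h : i ≠ j) : dK i - dK j ≠ 0 := by
  intro h0
  rw [sub_eq_zero] at h0
  exact h (MvPolynomial.X_injective (IsFractionRing.injective (MvPolynomial (Fin 6) ℚ) KK h0))

lemma tL_ne (i : Fin 6) : tL i ≠ 0 := by
  intro h0
  have := IsFractionRing.injective SRing LF (h0.trans (map_zero _).symm)
  exact MvPolynomial.X_ne_zero _ this

lemma algLF (c : KK) : algebraMap KK LF c = algebraMap SRing LF (C c) := rfl

lemma phi_E (i : Fin 6) : phiC (Ev i) = tL i := by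
  exact aeval_X _ _

lemma phi_G (i : Fin 6) : phiC (Gv i) = conicG dL xL (cpl i) / ∏ m ∈ Finset.univ.erase i, tL m := by
  exact aeval_X _ _

lemma phi_F (i j : Fin 6) (h : i < j) : phiC (Fv i j) =
    ellG dL xL i j / (algebraMap SRing LF (C (dK j - dK i)) * (tL i * tL j)) := by
  have h' : ¬ (s(i, j) : Sym2 (Fin 6)).IsDiag := by simpa using h.ne
  rw [Fv, dif_pos h']
  refine (aeval_X _ _).trans ?_
  dsimp only
  have h1 : (s(i, j) : Sym2 (Fin 6)).inf = i := by simp [h.le]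
  have h2 : (s(i, j) : Sym2 (Fin 6)).sup = j := by simp [h.le]
  rw [h1, h2]
  simp only [map_sub]
  rfl

/-- The three weight-two monomials have independent images. -/
lemma no_rel (c1 c2 c3 : KK) (h1 : c1 ≠ 0)
    (h : phiC (C c1 * (Ev 5 * Fv 2 4 * Gv 2) + C c2 * (Gv 5 * Fv 0 4 * Ev 0) +
      C c3 * (Fv 1 4 * Fv 3 4 * Fv 0 2)) = 0) : False := by
  have key := cub_indep ![c1 / (dK 4 - dK 2), c2 / (dK 4 - dK 0),
    c3 / ((dK 4 - dK 1) * (dK 4 - dK 3) * (dK 2 - dK 0))] ?_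
  · have := congrFun key 0
    simp [h1] at this
    exact dL_sub_ne (by decide) this
  · simp only [map_add, map_mul, phi_E, phi_G, phi_F _ _ (show (2 : Fin 6) < 4 by decide),
      phi_F _ _ (show (0 : Fin 6) < 4 by decide), phi_F _ _ (show (1 : Fin 6) < 4 by decide),
      phi_F _ _ (show (3 : Fin 6) < 4 by decide), phi_F _ _ (show (0 : Fin 6) < 2 by decide),
      cpl2, cpl5] at h
    have e2 : ∏ m ∈ Finset.univ.erase (2 : Fin 6), tL m = tL 0 * tL 1 * tL 3 * tL 4 * tL 5 := by
      rw [show Finset.univ.erase (2 : Fin 6) = {0, 1, 3, 4, 5} by decide]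
      simp [mul_assoc]
    have e5 : ∏ m ∈ Finset.univ.erase (5 : Fin 6), tL m = tL 0 * tL 1 * tL 2 * tL 3 * tL 4 := by
      rw [show Finset.univ.erase (5 : Fin 6) = {0, 1, 2, 3, 4} by decide]
      simp [mul_assoc]
    have hC : ∀ c : KK, phiC (C c) = algebraMap SRing LF (C c) := by
      intro c
      simp [phiC, algLF]
    rw [e2, e5] at h
    simp only [hC] at h
    have hdiv : ∀ a b : KK, algebraMap SRing LF (C (a / b)) =
        algebraMap SRing LF (C a) / algebraMap SRing LF (C b) := by
      intro a b
      rw [← algLF, ← algLF, ← algLF, map_div₀]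
    have hne : ∀ i j : Fin 6, i ≠ j → algebraMap SRing LF (C (dK i - dK j)) ≠ 0 := by
      intro i j hij
      rw [← algLF]
      exact (map_ne_zero _).2 (dL_sub_ne hij)
    have n42 := hne 4 2 (by decide)
    have n40 := hne 4 0 (by decide)
    have n41 := hne 4 1 (by decide)
    have n43 := hne 4 3 (by decide)
    have n20 := hne 2 0 (by decide)
    have t0 := tL_ne 0
    have t1 := tL_ne 1
    have t2 := tL_ne 2
    have t3 := tL_ne 3
    have t4 := tL_ne 4
    have t5 := tL_ne 5
    simp only [Fin.sum_univ_three, cubG, Matrix.cons_val_zero, Matrix.cons_val_one,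
      Matrix.cons_val, hdiv, map_mul]
    generalize algebraMap SRing LF (C (dK 4 - dK 2)) = a42 at *
    generalize algebraMap SRing LF (C (dK 4 - dK 0)) = a40 at *
    generalize algebraMap SRing LF (C (dK 4 - dK 1)) = a41 at *
    generalize algebraMap SRing LF (C (dK 4 - dK 3)) = a43 at *
    generalize algebraMap SRing LF (C (dK 2 - dK 0)) = a20 at *
    generalize algebraMap SRing LF (C c1) = k1 at *
    generalize algebraMap SRing LF (C c2) = k2 at *
    generalize algebraMap SRing LF (C c3) = k3 at *
    generalize tL 0 = s0 at *
    generalize tL 1 = s1 at *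
    generalize tL 2 = s2 at *
    generalize tL 3 = s3 at *
    generalize tL 4 = s4 at *
    generalize tL 5 = s5 at *
    generalize conicG dL xL ![0, 1, 3, 4, 5] = q2 at *
    generalize conicG dL xL ![0, 1, 2, 3, 4] = q5 at *
    generalize ellG dL xL 2 4 = l24 at *
    generalize ellG dL xL 0 4 = l04 at *
    generalize ellG dL xL 1 4 = l14 at *
    generalize ellG dL xL 3 4 = l34 at *
    generalize ellG dL xL 0 2 = l02 at *
    have h' := congrArg (fun z => z * (s0 * s1 * s2 * s3 * s4 ^ 2)) h
    simp only [zero_mul] at h'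
    rw [← h']
    field_simp

/-- Enumeration of the 27 variables. -/
def v27 : Fin 27 → CVar :=
  ![.inl 0, .inl 1, .inl 2, .inl 3, .inl 4, .inl 5,
    .inr (.inl ⟨s(0, 1), by decide⟩), .inr (.inl ⟨s(0, 2), by decide⟩),
    .inr (.inl ⟨s(0, 3), by decide⟩), .inr (.inl ⟨s(0, 4), by decide⟩),
    .inr (.inl ⟨s(0, 5), by decide⟩), .inr (.inl ⟨s(1, 2), by decide⟩),
    .inr (.inl ⟨s(1, 3), by decide⟩), .inr (.inl ⟨s(1, 4), by decide⟩),
    .inr (.inl ⟨s(1, 5), by decide⟩), .inr (.inl ⟨s(2, 3), by decide⟩),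
    .inr (.inl ⟨s(2, 4), by decide⟩), .inr (.inl ⟨s(2, 5), by decide⟩),
    .inr (.inl ⟨s(3, 4), by decide⟩), .inr (.inl ⟨s(3, 5), by decide⟩),
    .inr (.inl ⟨s(4, 5), by decide⟩),
    .inr (.inr 0), .inr (.inr 1), .inr (.inr 2), .inr (.inr 3), .inr (.inr 4), .inr (.inr 5)]

/-- The index of `E_i`. -/
def vE (i : Fin 6) : CVar := Sum.inl i

/-- The index of `F_s`. -/
def vF (s : {s : Sym2 (Fin 6) // ¬ s.IsDiag}) : CVar := Sum.inr (Sum.inl s)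

/-- The index of `G_i`. -/
def vG (i : Fin 6) : CVar := Sum.inr (Sum.inr i)

/-- Integer code of a degree. -/
def dcode (a : Fin 7 → ℤ) : ℤ :=
  a 0 + 16 * a 1 + 256 * a 2 + 4096 * a 3 + 65536 * a 4 + 1048576 * a 5 + 16777216 * a 6

/-- Code of variable. -/
def c27 (i : Fin 27) : ℤ := dcode (picDeg (v27 i))

instance : DecidableEq CVar :=
  inferInstanceAs (DecidableEq (Fin 6 ⊕ ({s : Sym2 (Fin 6) // ¬ s.IsDiag} ⊕ Fin 6)))

lemma v27_inj : Function.Injective v27 := by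
  have : ∀ i j, v27 i = v27 j → i = j := by decide +kernel
  exact fun i j h => this i j h

lemma v27_surj (v : CVar) : ∃ i, v27 i = v := by
  rcases v with i | ⟨s, hs⟩ | i
  · have h : ∀ i : Fin 6, ∃ j, v27 j = vE i := by decide +kernel
    exact h i
  · induction s using Sym2.ind with
    | _ a b =>
      have h : ∀ a b : Fin 6, ∀ h : a < b,
          ∃ j, v27 j = vF ⟨s(a, b), fun h' => h.ne (Sym2.mk_isDiag_iff.1 h')⟩ := by decide +kernel
      rcases lt_trichotomy a b with hab | hab | hab
      · exact h a b hab
      · exact absurd (Sym2.mk_isDiag_iff.2 hab) hs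
      · obtain ⟨j, hj⟩ := h b a hab
        refine ⟨j, hj.trans ?_⟩
        exact congrArg vF (Subtype.ext Sym2.eq_swap)
  · have h : ∀ i : Fin 6, ∃ j, v27 j = vG i := by decide +kernel
    exact h i

/-- Pairs. -/
def pairs27 : Finset (Fin 27 × Fin 27) := Finset.univ.filter fun p => p.1 < p.2

/-- Fiber. -/
def fib (n : ℤ) : Finset (Fin 27 × Fin 27) := pairs27.filter fun p => c27 p.1 + c27 p.2 = n

/-- Degrees with at least three members. -/
def DD : Finset ℤ := (pairs27.image fun p => c27 p.1 + c27 p.2).filter fun n => 3 ≤ (fib n).card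

lemma DD_all : DD.card ≤ 27 ∧ ∀ n ∈ DD, (fib n).card ≤ 5 := by
  decide +kernel

lemma lt_of_mem_pairs {p : Fin 27 × Fin 27} (hp : p ∈ pairs27) : p.1 < p.2 := by
  rw [pairs27, Finset.mem_filter] at hp
  exact hp.2

attribute [irreducible] pairs27 fib DD

lemma mem_fib {n : ℤ} {p : Fin 27 × Fin 27} :
    p ∈ fib n ↔ p ∈ pairs27 ∧ c27 p.1 + c27 p.2 = n := by
  rw [fib, Finset.mem_filter]

lemma mem_DD {n : ℤ} {p : Fin 27 × Fin 27} (hp : p ∈ fib n) (h : 3 ≤ (fib n).card) : n ∈ DD := by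
  rw [DD, Finset.mem_filter]
  refine ⟨?_, h⟩
  rw [← (mem_fib.1 hp).2]
  exact Finset.mem_image_of_mem (fun p : Fin 27 × Fin 27 => c27 p.1 + c27 p.2) (mem_fib.1 hp).1

/-- The quadratic monomial attached to a pair. -/
def mon (p : Fin 27 × Fin 27) : CVar →₀ ℕ :=
  Finsupp.single (v27 p.1) 1 + Finsupp.single (v27 p.2) 1

lemma picDegM_pair {u v : CVar} (h : u ≠ v) :
    picDegM (Finsupp.single u 1 + Finsupp.single v 1) = picDeg u + picDeg v := by
  have hd : Disjoint (Finsupp.single u 1 : CVar →₀ ℕ).support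
      (Finsupp.single v 1 : CVar →₀ ℕ).support := by
    rw [Finsupp.support_single _ one_ne_zero, Finsupp.support_single _ one_ne_zero]
    simpa using h
  unfold picDegM
  rw [Finsupp.support_add_eq hd, Finsupp.support_single _ one_ne_zero,
    Finsupp.support_single _ one_ne_zero, Finset.sum_union (by simpa using h)]
  simp [h, h.symm]

lemma dcode_add (a b : Fin 7 → ℤ) : dcode (a + b) = dcode a + dcode b := by
  simp only [dcode, Pi.add_apply]
  ring

lemma mon_code {p : Fin 27 × Fin 27} (hp : p ∈ pairs27) :
    dcode (picDegM (mon p)) = c27 p.1 + c27 p.2 := by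
  have hlt : p.1 < p.2 := lt_of_mem_pairs hp
  rw [mon, picDegM_pair (fun h => hlt.ne (v27_inj h)), dcode_add]
  rfl

lemma exists_pair (u v : CVar) (h : u ≠ v) :
    ∃ p ∈ pairs27, Finsupp.single u 1 + Finsupp.single v 1 = mon p := by
  obtain ⟨i, rfl⟩ := v27_surj u
  obtain ⟨j, rfl⟩ := v27_surj v
  rcases lt_trichotomy i j with hij | hij | hij
  · exact ⟨(i, j), by simp [pairs27, hij], rfl⟩
  · exact absurd (by rw [hij]) h
  · exact ⟨(j, i), by simp [pairs27, hij], add_comm _ _⟩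

open Classical in
/-- All admissible triples of monomials. -/
def triples : Finset (Finset (CVar →₀ ℕ)) :=
  DD.biUnion fun n => Finset.powersetCard 3 ((fib n).image mon)

lemma triples_card : triples.card ≤ 270 := by
  classical
  refine (Finset.card_biUnion_le_card_mul DD _ 10 fun n hn => ?_).trans
    (Nat.mul_le_mul_right 10 DD_all.1)
  rw [Finset.card_powersetCard]
  exact Nat.choose_le_choose 3 (Finset.card_image_le.trans (DD_all.2 n hn))

lemma mem_triples (S : Finset (CVar →₀ ℕ)) (hS : S.card = 3) (n : ℤ)
    (h : ∀ m ∈ S, ∃ p ∈ fib n, m = mon p) : S ∈ triples := by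
  classical
  have hsub : S ⊆ (fib n).image mon := by
    intro m hm
    obtain ⟨p, hp, hpm⟩ := h m hm
    rw [Finset.mem_image]
    exact ⟨p, hp, hpm.symm⟩
  have h3 : 3 ≤ (fib n).card := by
    rw [← hS]
    exact (Finset.card_le_card hsub).trans Finset.card_image_le
  obtain ⟨p, hp⟩ := Finset.card_pos.1 (by omega : 0 < (fib n).card)
  rw [triples, Finset.mem_biUnion]
  exact ⟨n, mem_DD hp h3, Finset.mem_powersetCard.2 ⟨hsub, hS⟩⟩

attribute [irreducible] triples

lemma mon_ne {p q : Fin 27 × Fin 27} (hp : p ∈ pairs27) (hq : q ∈ pairs27) (h : p ≠ q) :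
    mon p ≠ mon q := by
  intro hm
  have h1 : p.1 < p.2 := lt_of_mem_pairs hp
  have h2 : q.1 < q.2 := lt_of_mem_pairs hq
  have e1 := DFunLike.congr_fun hm (v27 p.1)
  have e2 := DFunLike.congr_fun hm (v27 p.2)
  simp only [mon, Finsupp.add_apply, Finsupp.single_apply, v27_inj.eq_iff] at e1 e2
  apply h
  ext1 <;> grind

lemma exists_tri (G : Finset (MvPolynomial CVar KK))
    (hcard : G.card = 270)
    (hsupp : ∀ g ∈ G, g.support.card = 3)
    (hquad : ∀ g ∈ G, ∀ m ∈ g.support,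
      ∃ u v : CVar, u ≠ v ∧ m = Finsupp.single u 1 + Finsupp.single v 1)
    (hdeg : ∀ g ∈ G, ∀ m ∈ g.support, ∀ m' ∈ g.support, picDegM m = picDegM m')
    (hdistinct : ∀ g ∈ G, ∀ g' ∈ G, g ≠ g' → g.support ≠ g'.support)
    (p q r : Fin 27 × Fin 27)
    (h : p ∈ pairs27 ∧ q ∈ pairs27 ∧ r ∈ pairs27 ∧ p ≠ q ∧ p ≠ r ∧ q ≠ r ∧
      c27 p.1 + c27 p.2 = c27 r.1 + c27 r.2 ∧ c27 q.1 + c27 q.2 = c27 r.1 + c27 r.2) :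
    ∃ g ∈ G, ∃ a b c : KK, a ≠ 0 ∧ b ≠ 0 ∧ c ≠ 0 ∧
      g = C a * (X (v27 p.1) * X (v27 p.2)) + C b * (X (v27 q.1) * X (v27 q.2)) +
        C c * (X (v27 r.1) * X (v27 r.2)) := by
  classical
  obtain ⟨hp, hq, hr, hpq, hpr, hqr, e1, e2⟩ := h
  have himg : G.image (fun g => g.support) = triples := by
    apply Finset.eq_of_subset_of_card_le
    · intro S hS
      obtain ⟨g, hg, rfl⟩ := Finset.mem_image.1 hS
      obtain ⟨m0, hm0⟩ := Finset.card_pos.1 (by rw [hsupp g hg]; omega : 0 < g.support.card)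
      refine mem_triples _ (hsupp g hg) (dcode (picDegM m0)) fun m hm => ?_
      obtain ⟨u, v, huv, rfl⟩ := hquad g hg m hm
      obtain ⟨p, hp, hpm⟩ := exists_pair u v huv
      refine ⟨p, mem_fib.2 ⟨hp, ?_⟩, hpm⟩
      rw [← mon_code hp, ← hpm, hdeg g hg _ hm _ hm0]
    · rw [Finset.card_image_of_injOn, hcard]
      · exact triples_card
      · intro g hg g' hg' hgg
        by_contra hne
        exact hdistinct g hg g' hg' hne hgg
  have m1 := mon_ne hp hq hpq
  have m2 := mon_ne hp hr hpr
  have m3 := mon_ne hq hr hqr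
  have hmem : ({mon p, mon q, mon r} : Finset (CVar →₀ ℕ)) ∈ triples := by
    refine mem_triples _ (Finset.card_eq_three.2 ⟨_, _, _, m1, m2, m3, rfl⟩) (c27 r.1 + c27 r.2) ?_
    intro m hm
    simp only [Finset.mem_insert, Finset.mem_singleton] at hm
    rcases hm with rfl | rfl | rfl
    · exact ⟨p, mem_fib.2 ⟨hp, e1⟩, rfl⟩
    · exact ⟨q, mem_fib.2 ⟨hq, e2⟩, rfl⟩
    · exact ⟨r, mem_fib.2 ⟨hr, rfl⟩, rfl⟩
  rw [← himg] at hmem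
  obtain ⟨g, hg, hgs⟩ := Finset.mem_image.1 hmem
  have hX : ∀ (s : Fin 27 × Fin 27) (a : KK), C a * (X (v27 s.1) * X (v27 s.2)) =
      monomial (mon s) a := by
    intro s a
    simp [X, C_mul_monomial, monomial_mul, mon]
  refine ⟨g, hg, g.coeff (mon p), g.coeff (mon q), g.coeff (mon r), ?_, ?_, ?_, ?_⟩
  · rw [← mem_support_iff, hgs]; simp
  · rw [← mem_support_iff, hgs]; simp
  · rw [← mem_support_iff, hgs]; simp
  · rw [hX, hX, hX]
    conv_lhs => rw [← support_sum_monomial_coeff g, hgs]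
    rw [Finset.sum_insert (by simp [m1, m2]), Finset.sum_insert (by simp [m3]),
      Finset.sum_singleton, add_assoc]

lemma initialForm_eq {σ K : Type*} [CommRing K] (w : σ → ℝ) (m0 m1 m2 m3 : σ →₀ ℕ)
    (c0 c1 c2 c3 : K) (h0 : c0 ≠ 0) (h1 : mWeight w m0 < mWeight w m1)
    (h2 : mWeight w m0 < mWeight w m2) (h3 : mWeight w m0 < mWeight w m3) :
    initialForm w (monomial m0 c0 + monomial m1 c1 + monomial m2 c2 + monomial m3 c3) =
      monomial m0 c0 := by
  classical
  set f := monomial m0 c0 + monomial m1 c1 + monomial m2 c2 + monomial m3 c3 with hf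
  have n1 : m1 ≠ m0 := by rintro rfl; exact lt_irrefl _ h1
  have n2 : m2 ≠ m0 := by rintro rfl; exact lt_irrefl _ h2
  have n3 : m3 ≠ m0 := by rintro rfl; exact lt_irrefl _ h3
  have hc : f.coeff m0 = c0 := by
    simp [hf, coeff_monomial, n1, n2, n3]
  have hs : ∀ m ∈ f.support, m = m0 ∨ mWeight w m0 < mWeight w m := by
    intro m hm
    by_contra hcon
    push Not at hcon
    rw [mem_support_iff] at hm
    apply hm
    have k1 : m1 ≠ m := by rintro rfl; exact absurd h1 (not_lt.2 hcon.2)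
    have k2 : m2 ≠ m := by rintro rfl; exact absurd h2 (not_lt.2 hcon.2)
    have k3 : m3 ≠ m := by rintro rfl; exact absurd h3 (not_lt.2 hcon.2)
    simp [hf, coeff_monomial, hcon.1.symm, k1, k2, k3]
  have hm0 : m0 ∈ f.support := by rw [mem_support_iff, hc]; exact h0
  have hfil : (f.support.filter fun m => ∀ m' ∈ f.support, mWeight w m ≤ mWeight w m') = {m0} := by
    ext m
    simp only [Finset.mem_filter, Finset.mem_singleton]
    constructor
    · rintro ⟨hm, hall⟩
      rcases hs m hm with h | h
      · exact h
      · exact absurd (hall m0 hm0) (not_le.2 h)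
    · rintro rfl
      refine ⟨hm0, fun m' hm' => ?_⟩
      rcases hs m' hm' with h | h
      · rw [h]
      · exact h.le
  unfold initialForm
  rw [hfil, Finset.sum_singleton, hc]

/-- Cubic monomial. -/
def mon3 (i j k : Fin 27) : CVar →₀ ℕ :=
  Finsupp.single (v27 i) 1 + Finsupp.single (v27 j) 1 + Finsupp.single (v27 k) 1

lemma mon3_eq (i j k : Fin 27) (a : KK) :
    C a * (X (v27 i) * X (v27 j) * X (v27 k)) = monomial (mon3 i j k) a := by
  simp [X, C_mul_monomial, monomial_mul, mon3]

lemma mWeight_mon3 (w : CVar → ℝ) (i j k : Fin 27) :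
    mWeight w (mon3 i j k) = w (v27 i) + w (v27 j) + w (v27 k) := by
  have hadd : ∀ a b : CVar →₀ ℕ, mWeight w (a + b) = mWeight w a + mWeight w b := by
    intro a b
    exact Finsupp.sum_add_index' (by simp) (by intros; push_cast; ring)
  have hs : ∀ v, mWeight w (Finsupp.single v 1) = w v := by
    intro v
    simp [mWeight]
  rw [mon3, hadd, hadd, hs, hs, hs]

/-- Natural number valued weights in the enumeration. -/
def wN : Fin 27 → ℕ := ![2, 1, 0, 1, 1, 1, 0, 2, 0, 0, 0, 1, 0, 0, 0, 1, 1, 1, 0, 0, 0, 0, 0, 0, 0, 0, 0]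

lemma wCox_v27 (i : Fin 27) : wCox (v27 i) = wN i := by
  fin_cases i <;> simp [v27, wCox, wN]

lemma F_v27 : Fv 4 5 = X (v27 20) ∧ Fv 2 4 = X (v27 16) ∧ Fv 0 4 = X (v27 9) ∧
    Fv 1 4 = X (v27 13) ∧ Fv 3 4 = X (v27 18) ∧ Fv 0 2 = X (v27 7) := by
  refine ⟨?_, ?_, ?_, ?_, ?_, ?_⟩ <;> exact dif_pos (by decide)

/-- let `G` be the set of the 270 trinomial generators of the
Cox ideal `I_X` (the ten trinomials `T_{1,jkl}` together with their 260
translates under the Weyl group `W(E₆)`; these are pinned down, up to a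
nonzero scalar on each generator, by the hypotheses below, which characterize
them as the 270 trinomial relations supported on three reducible members of a
conic bundle class).  Then the monomial `E₆·F₅₆·G₆` lies in the initial
ideal `in_w(I_X)` of the ideal `I_X` generated by `G`, for the weight
vector `w` of the paper. -/
theorem stmt_6 (G : Finset (MvPolynomial CVar KK))
    (hcard : G.card = 270)
    (hbase : ∀ j k l : Fin 6, 0 < j → j < k → k < l → T 0 j k l ∈ G)
    (hker : ∀ g ∈ G, phiC g = 0)
    (hsupp : ∀ g ∈ G, g.support.card = 3)
    (hquad : ∀ g ∈ G, ∀ m ∈ g.support,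
      ∃ u v : CVar, u ≠ v ∧ m = Finsupp.single u 1 + Finsupp.single v 1)
    (hdeg : ∀ g ∈ G, ∀ m ∈ g.support, ∀ m' ∈ g.support, picDegM m = picDegM m')
    (hdistinct : ∀ g ∈ G, ∀ g' ∈ G, g ≠ g' → g.support ≠ g'.support) :
    Ev 5 * Fv 4 5 * Gv 5 ∈
      initialIdeal wCox (Ideal.span (G : Set (MvPolynomial CVar KK))) := by
  obtain ⟨ga, hga, a1, a2, a3, ha1, ha2, ha3, ea⟩ := exists_tri G hcard hsupp hquad hdeg hdistinct
    (20, 26) (16, 23) (13, 22) (by decide +kernel)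
  obtain ⟨gb, hgb, b1, b2, b3, hb1, hb2, hb3, eb⟩ := exists_tri G hcard hsupp hquad hdeg hdistinct
    (5, 22) (7, 18) (1, 26) (by decide +kernel)
  obtain ⟨ge, hge, e1, e2, e3, he1, he2, he3, ee⟩ := exists_tri G hcard hsupp hquad hdeg hdistinct
    (1, 13) (0, 9) (5, 20) (by decide +kernel)
  obtain ⟨f45, f24, f04, f14, f34, f02⟩ := F_v27
  have hE0 : Ev 0 = X (v27 0) := rfl
  have hE5 : Ev 5 = X (v27 5) := rfl
  have hG2 : Gv 2 = X (v27 23) := rfl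
  have hG5 : Gv 5 = X (v27 26) := rfl
  set I := Ideal.span (G : Set (MvPolynomial CVar KK)) with hI
  set c0 := b1 * e1 * a1 + a3 * b3 * e3 with hc0
  set h := C (b1 * e1) * X (v27 5) * ga + C (- (a3 * e1)) * X (v27 13) * gb +
    C (a3 * b3) * X (v27 26) * ge with hh
  have hmem : h ∈ I :=
    I.add_mem (I.add_mem (I.mul_mem_left _ (Ideal.subset_span hga))
      (I.mul_mem_left _ (Ideal.subset_span hgb))) (I.mul_mem_left _ (Ideal.subset_span hge))
  have hphi : phiC h = 0 := by
    rw [hh, map_add, map_add, map_mul, map_mul phiC _ gb, map_mul phiC _ ge, hker ga hga,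
      hker gb hgb, hker ge hge]
    simp
  have hexp : h = C c0 * (X (v27 5) * X (v27 20) * X (v27 26)) +
      (C (b1 * e1 * a2) * (X (v27 5) * X (v27 16) * X (v27 23)) +
       C (a3 * b3 * e2) * (X (v27 26) * X (v27 9) * X (v27 0)) +
       C (- (a3 * e1 * b2)) * (X (v27 13) * X (v27 18) * X (v27 7))) := by
    rw [hh, ea, eb, ee, hc0]
    simp only [C_mul, C_add, C_neg]
    ring
  have hc0ne : c0 ≠ 0 := by
    intro h0
    rw [h0, C_0, zero_mul, zero_add, ← hE5, ← hG2, ← hG5, ← hE0, ← f24, ← f04, ← f14, ← f34,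
      ← f02] at hexp
    rw [hexp] at hphi
    exact no_rel _ _ _ (mul_ne_zero (mul_ne_zero hb1 he1) ha2) hphi
  have hinit : initialForm wCox h = monomial (mon3 5 20 26) c0 := by
    rw [hexp, mon3_eq, mon3_eq, mon3_eq, mon3_eq, ← add_assoc, ← add_assoc]
    apply initialForm_eq _ _ _ _ _ _ _ _ _ hc0ne <;>
    · rw [mWeight_mon3, mWeight_mon3]
      simp only [wCox_v27]
      exact_mod_cast (by decide)
  have hne : h ≠ 0 := by
    intro h0
    rw [h0] at hinit
    have : initialForm wCox (0 : MvPolynomial CVar KK) = 0 := by simp [initialForm]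
    rw [this] at hinit
    exact hc0ne (monomial_eq_zero.1 hinit.symm)
  have hin : monomial (mon3 5 20 26) c0 ∈ initialIdeal wCox I :=
    Ideal.subset_span ⟨h, hmem, hne, hinit.symm⟩
  have hfin : Ev 5 * Fv 4 5 * Gv 5 = C c0⁻¹ * monomial (mon3 5 20 26) c0 := by
    rw [f45, hE5, hG5, ← mon3_eq, ← mul_assoc, ← C_mul, inv_mul_cancel₀ hc0ne, C_1, one_mul]
  rw [hfin]
  exact Ideal.mul_mem_left _ _ hin

end
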